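/- Let c be a codeword of the p-ary dual code of points and planes of Q^+(5,q), q > 88, with weight at most 2q+2. Then via the Klein correspondence the support of c corresponds to the 2(q+1) lines of a hyperbolic quadric Q^+(3,q) in PG(3,q), where all lines of one regulus carry the same symbol alpha and all lines of the opposite regulus carry symbol -alpha. -/

import Mathlib

/-!
Let `S` be the support of `c`. If exactly one line of `S` passed through some point, or lay in some
plane, the corresponding sum would be nonzero; so every point, and every plane, on a line of `S` is
on a second line of `S`. Together with `|S| ≤ 2q + 2`, this alone determines the shape of `S`.

* No plane contains three lines of `S` (`LineGeometry.card_plane_le_two`). Let `k ≥ 3` lines of `S`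
  lie in `e`. Each of them has at least `q + 2 - k` points on none of the others, and through each
  such point goes a line of `S` outside `e`, all these lines being distinct. Hence
  `k (q + 2 - k) ≤ 2q + 2 - k`, that is `(k - 2)(q + 1 - k) ≤ 0`, so `k ≥ q + 1`. There are then at
  most `q + 1` lines of `S` outside `e`; each of the `k` lines meets at least `q` of them, because of
  the planes through it other than `e`. By double counting some line of `S` outside `e` meets at
  least `q` of the `k` lines, necessarily in one common point. At most two of the `k` lines miss that
  line, so each of these `q` concurrent lines has at least `q - 2` points on no other line of `S` in
  `e`, giving `q (q - 2) ≤ q + 1`, a contradiction.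
* The axioms used (`LineGeometry`) are self-dual, so no three lines of `S` are concurrent either.
* Three pairwise meeting lines are concurrent or coplanar, so the intersection graph on `S` is
  triangle-free. It has minimum degree at least `q + 1` and at most `2q + 2` vertices, so it is the
  complete bipartite graph `K_{q+1,q+1}` (`LineGeometry.exists_bipartition`).
* Three lines of one class lie on a hyperbolic quadric (`exists_quadric`). A line meeting three
  pairwise skew lines of the quadric lies on it (`transversal_mem`), so all of `S` does.
  Conversely, through a point of the quadric go at most two of its lines (`eq_or_eq_of_common`),
  and each point on a line of `S` is already on two lines of `S`; so every line of the quadric meeting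
  a line of `S` is in `S`. Any other line of the quadric would meet a line of the quadric which meets
  `S` (`exists_transversal`), so there is none.
* The sum at the point common to lines `a` and `b` of different classes is `c a + c b`, whence
  the values `α` and `-α`.
-/

open scoped Classical

noncomputable section

variable (F : Type*) [Field F] [Fintype F]

/-- Points of `PG(3,q)`: one-dimensional subspaces of `F^4`. -/
def PGPoint := {W : Submodule F (Fin 4 → F) // Module.finrank F W = 1}

/-- Lines of `PG(3,q)`: two-dimensional subspaces of `F^4`. -/
def PGLine := {W : Submodule F (Fin 4 → F) // Module.finrank F W = 2}

/-- Planes of `PG(3,q)`: three-dimensional subspaces of `F^4`. -/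
def PGPlane := {W : Submodule F (Fin 4 → F) // Module.finrank F W = 3}

/-- The standard hyperbolic quadratic form `x₀x₁ + x₂x₃` on `F^4`, defining `Q⁺(3,q)`. -/
def H3Form : (Fin 4 → F) → F := fun v => v 0 * v 1 + v 2 * v 3

/-- The lines of `PG(3,q)` lying on the hyperbolic quadric obtained from the standard
quadric `x₀x₁ + x₂x₃ = 0` by the change of coordinates `g`. -/
def hypQuadricLines (g : (Fin 4 → F) ≃ₗ[F] (Fin 4 → F)) : Set (PGLine F) :=
  {L | ∀ v ∈ L.1, H3Form F (g v) = 0}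

/-! ### Sets of lines covering each of their points and planes twice -/

/-- The incidence properties of `PG(3,q)` used in the counting arguments, for an incidence relation
`I` of points and lines and an incidence relation `J` of planes and lines. The list is self-dual:
exchanging points and planes gives the same axioms (`LineGeometry.dual`). A line is only required
to have at least `q + 1` points and to lie in at least `q + 1` planes. -/
structure LineGeometry {P L E : Type*} (I : P → L → Prop) (J : E → L → Prop) (q : ℕ) : Prop where
  points : ∀ l, ∃ s : Finset P, q + 1 ≤ s.card ∧ ∀ x ∈ s, I x l
  planes : ∀ l, ∃ s : Finset E, q + 1 ≤ s.card ∧ ∀ x ∈ s, J x l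
  point_unique : ∀ l m x y, l ≠ m → I x l → I x m → I y l → I y m → x = y
  plane_unique : ∀ l m x y, l ≠ m → J x l → J x m → J y l → J y m → x = y
  meet_iff : ∀ l m, l ≠ m → ((∃ x, I x l ∧ I x m) ↔ ∃ e, J e l ∧ J e m)
  triangle : ∀ l m n, l ≠ m → m ≠ n → l ≠ n → (∃ x, I x l ∧ I x m) → (∃ x, I x m ∧ I x n) →
    (∃ x, I x l ∧ I x n) → (∃ x, I x l ∧ I x m ∧ I x n) ∨ (∃ e, J e l ∧ J e m ∧ J e n)

namespace LineGeometry

variable {P L E : Type*} {I : P → L → Prop} {J : E → L → Prop} {q : ℕ}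

theorem dual (G : LineGeometry I J q) : LineGeometry J I q where
  points := G.planes
  planes := G.points
  point_unique := G.plane_unique
  plane_unique := G.point_unique
  meet_iff l m h := (G.meet_iff l m h).symm
  triangle l m n h1 h2 h3 a b c :=
    (G.triangle l m n h1 h2 h3 ((G.meet_iff _ _ h1).2 a) ((G.meet_iff _ _ h2).2 b)
      ((G.meet_iff _ _ h3).2 c)).symm

theorem card_le_of_choice {α β : Type*} (s : Finset α) (A : Finset β) (R : α → β → Prop)
    (h : ∀ x ∈ s, ∃ m ∈ A, R x m) (hu : ∀ x y m, R x m → R y m → x = y) :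
    s.card ≤ A.card := by
  rcases s.eq_empty_or_nonempty with rfl | ⟨x₀, hx₀⟩
  · simp
  have : Nonempty β := ⟨(h x₀ hx₀).choose⟩
  choose! f hf hR using h
  refine Finset.card_le_card_of_injOn f (fun x hx => hf x hx) ?_
  intro x hx y hy hxy
  exact hu x y (f x) (hR x hx) (hxy ▸ hR y hy)

/-- A line outside the plane `e` which meets two lines of `e` meets them in the same point. -/
theorem concurrent_of_not_mem (G : LineGeometry I J q) {e : E} {l l' m : L} {x : P}
    (hl : J e l) (hl' : J e l') (hm : ¬ J e m) (hne : l' ≠ l)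
    (hx : I x l) (hxm : I x m) (h' : ∃ y, I y m ∧ I y l') : I x l' := by
  have hml : m ≠ l := by rintro rfl; exact hm hl
  have hml' : m ≠ l' := by rintro rfl; exact hm hl'
  rcases G.triangle m l l' hml hne.symm hml' ⟨x, hxm, hx⟩
    ((G.meet_iff _ _ hne.symm).2 ⟨e, hl, hl'⟩) h' with ⟨y, ym, yl, yl'⟩ | ⟨f, fm, fl, fl'⟩
  · rw [G.point_unique m l x y hml hxm hx ym yl]; exact yl'
  · rw [G.plane_unique l l' f e hne.symm fl fl' hl hl'] at fm; exact absurd fm hm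

/-- Let `s` be a set of points of a line `l ∈ S` of the plane `e`, none of them on another line of
`S` in `e`. Then at least `|s|` lines of `S` outside `e` meet `l` and no other line of `S` in `e`. -/
theorem private_lines (G : LineGeometry I J q) {S : Finset L}
    (hpt : ∀ x, ∀ l ∈ S, I x l → ∃ m ∈ S, m ≠ l ∧ I x m)
    {e : E} {l : L} (hlS : l ∈ S) (hl : J e l) (s : Finset P) (hs : ∀ x ∈ s, I x l)
    (hcov : ∀ x ∈ s, ∀ l' ∈ S, J e l' → I x l' → l' = l) :
    s.card ≤ (S.filter (fun m => ¬ J e m ∧ (∃ x, I x m ∧ I x l) ∧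
      ∀ l' ∈ S, J e l' → l' ≠ l → ¬ ∃ x, I x m ∧ I x l')).card := by
  refine card_le_of_choice s _ (fun x m => m ≠ l ∧ I x m ∧ I x l) ?_ ?_
  · intro x hx
    obtain ⟨m, hmS, hml, hxm⟩ := hpt x l hlS (hs x hx)
    have hme : ¬ J e m := fun h => hml (hcov x hx m hmS h hxm)
    refine ⟨m, Finset.mem_filter.2 ⟨hmS, hme, ⟨x, hxm, hs x hx⟩, ?_⟩, hml, hxm, hs x hx⟩
    intro l' hl'S hl' hne h
    exact hne (hcov x hx l' hl'S hl'
      (G.concurrent_of_not_mem hl hl' hme hne (hs x hx) hxm h))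
  · rintro x y m ⟨h, h1, h2⟩ ⟨-, h3, h4⟩
    exact G.point_unique m l x y h h1 h2 h3 h4

/-- The sets of lines of `S` outside `e` that meet only `l` among the lines of `S` in `e` are
disjoint for different `l`. -/
theorem sum_private_le {S : Finset L} {e : E} (T' : Finset L) (hT' : ∀ l ∈ T', l ∈ S ∧ J e l)
    (b : ℕ) (hb : ∀ l ∈ T', b ≤ (S.filter (fun m => ¬ J e m ∧ (∃ x, I x m ∧ I x l) ∧
      ∀ l' ∈ S, J e l' → l' ≠ l → ¬ ∃ x, I x m ∧ I x l')).card) :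
    T'.card * b ≤ (S.filter (fun m => ¬ J e m)).card := by
  calc T'.card * b = ∑ l ∈ T', b := by simp
    _ ≤ ∑ l ∈ T', _ := Finset.sum_le_sum hb
    _ = (T'.biUnion _).card := (Finset.card_biUnion ?_).symm
    _ ≤ _ := Finset.card_le_card ?_
  · intro l hl l' hl' hne
    rw [Function.onFun, Finset.disjoint_left]
    intro m hm hm'
    rw [Finset.mem_filter] at hm hm'
    exact hm.2.2.2 l' (hT' l' hl').1 (hT' l' hl').2 hne.symm hm'.2.2.1
  · intro m hm
    simp only [Finset.mem_biUnion, Finset.mem_filter] at hm ⊢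
    obtain ⟨l, -, h1, h2, -⟩ := hm
    exact ⟨h1, h2⟩

/-- A plane contains at most two lines of a set `S` of at most `2q + 2` lines which covers each of
its points and each of its planes at least twice. -/
theorem card_plane_le_two (G : LineGeometry I J q) (hq : 5 < q) {S : Finset L}
    (hS : S.card ≤ 2 * q + 2)
    (hpt : ∀ x, ∀ l ∈ S, I x l → ∃ m ∈ S, m ≠ l ∧ I x m)
    (hpl : ∀ e, ∀ l ∈ S, J e l → ∃ m ∈ S, m ≠ l ∧ J e m) (e : E) :
    (S.filter (J e)).card ≤ 2 := by
  set T := S.filter (J e) with hT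
  set X := S.filter (fun m => ¬ J e m) with hX
  have hTX : T.card + X.card = S.card := Finset.card_filter_add_card_filter_not _
  have memT : ∀ l, l ∈ T ↔ l ∈ S ∧ J e l := fun l => Finset.mem_filter
  by_contra! hk
  -- a point of `l` is lost only if another line of `T` passes through it
  have hcard : ∀ l ∈ T, ∀ s : Finset P, (∀ x ∈ s, I x l) →
      (s.filter (fun x => ∃ l' ∈ T, l' ≠ l ∧ I x l')).card ≤ (T.erase l).card := by
    intro l hl s hs
    refine card_le_of_choice _ _ (fun x l' => l' ≠ l ∧ I x l' ∧ I x l) ?_ ?_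
    · intro x hx
      obtain ⟨hx, l', h1, h2, h3⟩ := Finset.mem_filter.1 hx
      exact ⟨l', Finset.mem_erase.2 ⟨h2, h1⟩, h2, h3, hs x hx⟩
    · rintro x y m ⟨h, h1, h2⟩ ⟨-, h3, h4⟩
      exact G.point_unique m l x y h h1 h2 h3 h4
  have hbig : q + 1 ≤ T.card := by
    by_contra! hlt
    have := sum_private_le (I := I) (S := S) (e := e) T (fun l hl => (memT l).1 hl)
      (q + 2 - T.card) (by
        intro l hl
        obtain ⟨s, hsc, hs⟩ := G.points l
        have h1 := hcard l hl s hs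
        rw [Finset.card_erase_of_mem hl] at h1
        have h2 := Finset.card_filter_add_card_filter_not (s := s)
          (fun x => ∃ l' ∈ T, l' ≠ l ∧ I x l')
        have h3 := G.private_lines hpt ((memT l).1 hl).1 ((memT l).1 hl).2
          (s.filter (fun x => ¬ ∃ l' ∈ T, l' ≠ l ∧ I x l'))
          (fun x hx => hs x (Finset.mem_filter.1 hx).1) (by
            intro x hx l' hl' hl'e hxl'
            by_contra hne
            exact (Finset.mem_filter.1 hx).2 ⟨l', (memT l').2 ⟨hl', hl'e⟩, hne, hxl'⟩)
        refine le_trans ?_ h3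
        omega)
    rw [← hX] at this
    have h4 : T.card * (q + 2 - T.card) + T.card ≤ 2 * q + 2 := by omega
    obtain ⟨d, hd⟩ : ∃ d, q = T.card + d := ⟨q - T.card, by omega⟩
    have h5 : q + 2 - T.card = d + 2 := by omega
    -- `h4` amounts to `(k - 2) * (q + 1 - k) ≤ 0` for `k = T.card`
    rw [h5] at h4
    obtain ⟨k, hk'⟩ : ∃ k, T.card = k + 3 := ⟨T.card - 3, by omega⟩
    rw [hk'] at h4 hd
    nlinarith
  -- the planes through `l` other than `e`
  have hD : ∀ l ∈ T, q ≤ (X.filter (fun m => ∃ x, I x m ∧ I x l)).card := by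
    intro l hl
    obtain ⟨s, hsc, hs⟩ := G.planes l
    have h1 : q ≤ (s.erase e).card := by
      have := Finset.pred_card_le_card_erase (s := s) (a := e)
      omega
    refine h1.trans (card_le_of_choice _ _ (fun f m => m ≠ l ∧ J f m ∧ J f l) ?_ ?_)
    · intro f hf
      obtain ⟨hfe, hfs⟩ := Finset.mem_erase.1 hf
      obtain ⟨m, hmS, hml, hfm⟩ := hpl f l ((memT l).1 hl).1 (hs f hfs)
      have hfl := hs f hfs
      refine ⟨m, Finset.mem_filter.2 ⟨Finset.mem_filter.2 ⟨hmS, fun hem => hfe ?_⟩, ?_⟩,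
        hml, hfm, hfl⟩
      · exact G.plane_unique m l f e hml hfm hfl hem ((memT l).1 hl).2
      · exact (G.meet_iff m l hml).2 ⟨f, hfm, hfl⟩
    · rintro x y m ⟨h, h1, h2⟩ ⟨-, h3, h4⟩
      exact G.plane_unique m l x y h h1 h2 h3 h4
  have hT0 : T.Nonempty := Finset.card_pos.1 (by omega)
  have hXq : q ≤ X.card := by
    obtain ⟨l, hl⟩ := hT0
    exact (hD l hl).trans (Finset.card_le_card (Finset.filter_subset _ _))
  have hcount : T.card * q ≤ ∑ m ∈ X, (T.filter (fun l => ∃ x, I x m ∧ I x l)).card := by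
    calc T.card * q = ∑ l ∈ T, q := by simp
      _ ≤ ∑ l ∈ T, (X.filter (fun m => ∃ x, I x m ∧ I x l)).card := Finset.sum_le_sum hD
      _ = _ := by
        simp only [Finset.card_filter]
        exact Finset.sum_comm
  -- an average line of `X` meets more than `q - 1` lines of `T`
  obtain ⟨m, hmX, hm⟩ : ∃ m ∈ X, q ≤ (T.filter (fun l => ∃ x, I x m ∧ I x l)).card := by
    by_contra! hcon
    have h1 : ∑ m ∈ X, (T.filter (fun l => ∃ x, I x m ∧ I x l)).card ≤ X.card * (q - 1) := by
      rw [← smul_eq_mul]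
      exact Finset.sum_le_card_nsmul _ _ _ (fun m hm => by have := hcon m hm; omega)
    have h2 : X.card ≤ q + 1 := by omega
    obtain ⟨r, rfl⟩ : ∃ r, q = r + 1 := ⟨q - 1, by omega⟩
    simp only [Nat.add_sub_cancel] at h1
    nlinarith
  set T' := T.filter (fun l => ∃ x, I x m ∧ I x l) with hT'
  have hme : ¬ J e m := (Finset.mem_filter.1 hmX).2
  have hfin := sum_private_le (I := I) (S := S) (e := e) T'
    (fun l hl => (memT l).1 (Finset.mem_filter.1 hl).1) (q - 2) (by
      intro l hl
      obtain ⟨hlT, z, hzm, hzl⟩ := Finset.mem_filter.1 hl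
      obtain ⟨s, hsc, hs⟩ := G.points l
      have hTl := (memT l).1 hlT
      -- covered points other than `z` lie on lines of `T` that do not meet `m`
      have h1 : ((s.erase z).filter (fun x => ∃ l' ∈ T, l' ≠ l ∧ I x l')).card ≤
          (T.filter (fun l => ¬ ∃ x, I x m ∧ I x l)).card := by
        refine card_le_of_choice _ _ (fun x l' => l' ≠ l ∧ I x l' ∧ I x l) ?_ ?_
        · intro x hx
          obtain ⟨hx, l', h1, h2, h3⟩ := Finset.mem_filter.1 hx
          obtain ⟨hxz, hxs⟩ := Finset.mem_erase.1 hx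
          refine ⟨l', Finset.mem_filter.2 ⟨h1, fun hmeet => hxz ?_⟩, h2, h3, hs x hxs⟩
          have := G.concurrent_of_not_mem hTl.2 ((memT l').1 h1).2 hme h2 hzl hzm hmeet
          exact G.point_unique l' l x z h2 h3 (hs x hxs) this hzl
        · rintro x y m ⟨h, h1, h2⟩ ⟨-, h3, h4⟩
          exact G.point_unique m l x y h h1 h2 h3 h4
      have h0 : T'.card + (T.filter (fun l => ¬ ∃ x, I x m ∧ I x l)).card = T.card :=
        Finset.card_filter_add_card_filter_not _
      have h2 := Finset.card_filter_add_card_filter_not (s := s.erase z)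
          (fun x => ∃ l' ∈ T, l' ≠ l ∧ I x l')
      have h4 := Finset.pred_card_le_card_erase (s := s) (a := z)
      have h3 := G.private_lines hpt hTl.1 hTl.2
          ((s.erase z).filter (fun x => ¬ ∃ l' ∈ T, l' ≠ l ∧ I x l'))
          (fun x hx => hs x (Finset.mem_of_mem_erase (Finset.mem_filter.1 hx).1)) (by
            intro x hx l' hl' hl'e hxl'
            by_contra hne
            exact (Finset.mem_filter.1 hx).2 ⟨l', (memT l').2 ⟨hl', hl'e⟩, hne, hxl'⟩)
      refine le_trans ?_ h3
      omega)
  rw [← hX] at hfin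
  have h6 : q * (q - 2) ≤ q + 1 := by
    refine (Nat.mul_le_mul_right _ hm).trans (hfin.trans ?_)
    omega
  obtain ⟨r, rfl⟩ : ∃ r, q = r + 2 := ⟨q - 2, by omega⟩
  simp only [Nat.add_sub_cancel] at h6
  nlinarith

/-- A nonempty set `S` of at most `2q + 2` lines which covers each of its points and each of its
planes at least twice is the union of two sets of `q + 1` pairwise skew lines, each line of one
meeting each line of the other. -/
theorem exists_bipartition (G : LineGeometry I J q) (hq : 5 < q) {S : Finset L}
    (hne : S.Nonempty) (hS : S.card ≤ 2 * q + 2)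
    (hpt : ∀ x, ∀ l ∈ S, I x l → ∃ m ∈ S, m ≠ l ∧ I x m)
    (hpl : ∀ e, ∀ l ∈ S, J e l → ∃ m ∈ S, m ≠ l ∧ J e m) :
    ∃ A B : Finset L, A ∪ B = S ∧ Disjoint A B ∧ A.card = q + 1 ∧ B.card = q + 1 ∧
      (∀ l ∈ A, ∀ m ∈ A, l ≠ m → ¬ ∃ x, I x l ∧ I x m) ∧
      (∀ l ∈ B, ∀ m ∈ B, l ≠ m → ¬ ∃ x, I x l ∧ I x m) ∧
      (∀ l ∈ A, ∀ m ∈ B, ∃ x, I x l ∧ I x m) := by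
  have hpl2 := G.card_plane_le_two hq hS hpt hpl
  have hpt2 := G.dual.card_plane_le_two hq hS hpl hpt
  have three : ∀ (Q : L → Prop), (S.filter Q).card ≤ 2 → ∀ l ∈ S, ∀ m ∈ S, ∀ n ∈ S,
      l ≠ m → m ≠ n → l ≠ n → ¬ (Q l ∧ Q m ∧ Q n) := by
    rintro Q hQ l hl m hm n hn h1 h2 h3 ⟨ql, qm, qn⟩
    have : 2 < (S.filter Q).card := Finset.two_lt_card.2
      ⟨l, by simp [hl, ql], m, by simp [hm, qm], n, by simp [hn, qn], h1, h3, h2⟩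
    omega
  have tri : ∀ l ∈ S, ∀ m ∈ S, ∀ n ∈ S, l ≠ m → m ≠ n → l ≠ n → (∃ x, I x l ∧ I x m) →
      (∃ x, I x m ∧ I x n) → (∃ x, I x l ∧ I x n) → False := by
    intro l hl m hm n hn h1 h2 h3 a b c
    rcases G.triangle l m n h1 h2 h3 a b c with ⟨x, hx⟩ | ⟨e, he⟩
    · exact three _ (hpt2 x) l hl m hm n hn h1 h2 h3 hx
    · exact three _ (hpl2 e) l hl m hm n hn h1 h2 h3 he
  -- neighbourhoods in the intersection graph on `S`
  let N : L → Finset L := fun l => S.filter (fun m => m ≠ l ∧ ∃ x, I x l ∧ I x m)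
  have memN : ∀ l m, m ∈ N l ↔ m ∈ S ∧ m ≠ l ∧ ∃ x, I x l ∧ I x m :=
    fun l m => Finset.mem_filter
  have hdeg : ∀ l ∈ S, q + 1 ≤ (N l).card := by
    intro l hl
    obtain ⟨s, hsc, hs⟩ := G.points l
    refine hsc.trans (card_le_of_choice _ _ (fun x m => m ≠ l ∧ I x m ∧ I x l) ?_ ?_)
    · intro x hx
      obtain ⟨m, hmS, hml, hxm⟩ := hpt x l hl (hs x hx)
      exact ⟨m, (memN l m).2 ⟨hmS, hml, x, hs x hx, hxm⟩, hml, hxm, hs x hx⟩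
    · rintro x y m ⟨h, h1, h2⟩ ⟨-, h3, h4⟩
      exact G.point_unique m l x y h h1 h2 h3 h4
  have symm : ∀ {l m : L}, (∃ x, I x l ∧ I x m) → ∃ x, I x m ∧ I x l :=
    fun ⟨x, h1, h2⟩ => ⟨x, h2, h1⟩
  have indep : ∀ l ∈ S, ∀ m ∈ N l, ∀ n ∈ N l, m ≠ n → ¬ ∃ x, I x m ∧ I x n := by
    intro l hl m hm n hn hmn h
    rw [memN] at hm hn
    exact tri l hl m hm.1 n hn.1 hm.2.1.symm hmn hn.2.1.symm hm.2.2 h hn.2.2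
  obtain ⟨a, ha⟩ := hne
  obtain ⟨b, hb⟩ : (N a).Nonempty := Finset.card_pos.1 (by have := hdeg a ha; omega)
  obtain ⟨hbS, hba, hab⟩ := (memN a b).1 hb
  have hdis : Disjoint (N b) (N a) := by
    rw [Finset.disjoint_left]
    intro n hn hn'
    rw [memN] at hn hn'
    exact tri a ha b hbS n hn.1 hba.symm hn.2.1.symm hn'.2.1.symm hab hn.2.2 hn'.2.2
  have hsub : N b ∪ N a ⊆ S :=
    Finset.union_subset (Finset.filter_subset _ _) (Finset.filter_subset _ _)
  have hcu := Finset.card_union_of_disjoint hdis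
  have hle := Finset.card_le_card hsub
  have h1 := hdeg a ha
  have h2 := hdeg b hbS
  have hun : N b ∪ N a = S := Finset.eq_of_subset_of_card_le hsub (by omega)
  -- the classes are the neighbourhoods of the two ends of an edge
  refine ⟨N b, N a, hun, hdis, by omega, by omega, indep b hbS, indep a ha, ?_⟩
  intro l hl m hm
  have hlS := ((memN b l).1 hl).1
  have hsub' : N l ⊆ N a := by
    intro n hn
    have hnS := ((memN l n).1 hn).1
    rw [← hun, Finset.mem_union] at hnS
    refine hnS.resolve_left fun hnb => ?_
    exact indep b hbS l hl n hnb ((memN l n).1 hn).2.1.symm ((memN l n).1 hn).2.2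
  have heq : N l = N a := Finset.eq_of_subset_of_card_le hsub' (by
    have := hdeg l hlS; omega)
  rw [← heq] at hm
  exact ((memN l m).1 hm).2.2

end LineGeometry

/-! ### Incidence of points, lines and planes in `PG(3,q)` -/

set_option linter.unusedSectionVars false

variable {F}

instance : Finite (PGPoint F) :=
  inferInstanceAs (Finite {W : Submodule F (Fin 4 → F) // Module.finrank F W = 1})
instance : Finite (PGLine F) :=
  inferInstanceAs (Finite {W : Submodule F (Fin 4 → F) // Module.finrank F W = 2})
instance : Finite (PGPlane F) :=
  inferInstanceAs (Finite {W : Submodule F (Fin 4 → F) // Module.finrank F W = 3})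

theorem exists_point_iff (l m : PGLine F) :
    (∃ P : PGPoint F, P.1 ≤ l.1 ∧ P.1 ≤ m.1) ↔ ∃ v : Fin 4 → F, v ≠ 0 ∧ v ∈ l.1 ∧ v ∈ m.1 := by
  constructor
  · rintro ⟨P, hl, hm⟩
    have : P.1 ≠ ⊥ := by
      intro h
      have := P.2
      rw [h, finrank_bot] at this
      exact absurd this (by norm_num)
    obtain ⟨v, hv, hv0⟩ := Submodule.exists_mem_ne_zero_of_ne_bot this
    exact ⟨v, hv0, hl hv, hm hv⟩
  · rintro ⟨v, hv, hl, hm⟩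
    exact ⟨⟨Submodule.span F {v}, finrank_span_singleton hv⟩,
      (Submodule.span_singleton_le_iff_mem _ _).2 hl,
      (Submodule.span_singleton_le_iff_mem _ _).2 hm⟩

theorem exists_point_iff_inf (l m : PGLine F) :
    (∃ P : PGPoint F, P.1 ≤ l.1 ∧ P.1 ≤ m.1) ↔ l.1 ⊓ m.1 ≠ ⊥ := by
  rw [exists_point_iff, Submodule.ne_bot_iff]
  constructor
  · rintro ⟨v, h, h1, h2⟩
    exact ⟨v, ⟨h1, h2⟩, h⟩
  · rintro ⟨v, ⟨h1, h2⟩, h⟩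
    exact ⟨v, h, h1, h2⟩

theorem line_eq_of_le {l m : PGLine F} (h : l.1 ≤ m.1) : l = m :=
  Subtype.ext (Submodule.eq_of_le_of_finrank_eq h (l.2.trans m.2.symm))

theorem finrank_inf_le_one {l m : PGLine F} (h : l ≠ m) :
    Module.finrank F ↥(l.1 ⊓ m.1) ≤ 1 := by
  by_contra! hlt
  refine h (line_eq_of_le ?_)
  have : l.1 ⊓ m.1 = l.1 := Submodule.eq_of_le_of_finrank_le inf_le_left (by rw [l.2]; exact hlt)
  exact inf_eq_left.1 this

theorem point_eq_of_ne {l m : PGLine F} {x y : PGPoint F} (h : l ≠ m) (h1 : x.1 ≤ l.1)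
    (h2 : x.1 ≤ m.1) (h3 : y.1 ≤ l.1) (h4 : y.1 ≤ m.1) : x = y := by
  have hle := finrank_inf_le_one h
  have hx : x.1 = l.1 ⊓ m.1 :=
    Submodule.eq_of_le_of_finrank_le (le_inf h1 h2) (by rw [x.2]; exact hle)
  have hy : y.1 = l.1 ⊓ m.1 :=
    Submodule.eq_of_le_of_finrank_le (le_inf h3 h4) (by rw [y.2]; exact hle)
  exact Subtype.ext (hx.trans hy.symm)

theorem finrank_sup_add_inf (l m : PGLine F) :
    Module.finrank F ↥(l.1 ⊔ m.1) + Module.finrank F ↥(l.1 ⊓ m.1) = 4 := by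
  rw [Submodule.finrank_sup_add_finrank_inf_eq, l.2, m.2]

theorem finrank_sup_eq_three {l m : PGLine F} (h : l ≠ m)
    (hp : ∃ P : PGPoint F, P.1 ≤ l.1 ∧ P.1 ≤ m.1) : Module.finrank F ↥(l.1 ⊔ m.1) = 3 := by
  obtain ⟨P, h1, h2⟩ := hp
  have a := finrank_inf_le_one h
  have b := Submodule.finrank_mono (le_inf h1 h2)
  rw [P.2] at b
  have := finrank_sup_add_inf l m
  omega

theorem line_two_le_sup {l m : PGLine F} (h : l ≠ m) : 3 ≤ Module.finrank F ↥(l.1 ⊔ m.1) := by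
  have a := finrank_inf_le_one h
  have := finrank_sup_add_inf l m
  omega

/-- `PG(3,q)` satisfies the axioms. The points of a line `l` are the points of the projective line
over `l`, and the planes through `l` are those of the projective line over `F^4 / l`. -/
theorem pgGeometry : LineGeometry (fun (P : PGPoint F) (l : PGLine F) => P.1 ≤ l.1)
    (fun (e : PGPlane F) (l : PGLine F) => l.1 ≤ e.1) (Fintype.card F) where
  points l := by
    let f : {W : Submodule F l.1 // Module.finrank F W = 1} → PGPoint F :=
      fun W => ⟨W.1.map l.1.subtype, by rw [Submodule.finrank_map_subtype_eq]; exact W.2⟩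
    have hf : Function.Injective f := fun a b h =>
      Subtype.ext (Submodule.map_injective_of_injective l.1.injective_subtype
        (congrArg Subtype.val h))
    refine ⟨(Set.toFinite (Set.range f)).toFinset, ?_, ?_⟩
    · rw [← Set.ncard_eq_toFinset_card, Set.ncard_range_of_injective hf,
        ← Nat.card_congr (Projectivization.equivSubmodule F l.1),
        Projectivization.card_of_finrank_two F l.1 l.2, Nat.card_eq_fintype_card]
    · intro x hx
      obtain ⟨W, rfl⟩ := (Set.Finite.mem_toFinset _).1 hx
      exact Submodule.map_subtype_le _ _
  planes l := by
    have h2 : Module.finrank F ((Fin 4 → F) ⧸ l.1) = 2 := by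
      have := l.1.finrank_quotient_add_finrank
      rw [l.2, Module.finrank_fin_fun] at this
      omega
    let f : {W : Submodule F ((Fin 4 → F) ⧸ l.1) // Module.finrank F W = 1} → PGPlane F :=
      fun W => ⟨W.1.comap l.1.mkQ, by
        have h := Submodule.finrank_quotient_add_finrank (W.1.comap l.1.mkQ)
        have h' := Submodule.finrank_quotient_add_finrank W.1
        have e := (Submodule.quotientQuotientEquivQuotient l.1 (W.1.comap l.1.mkQ)
          (Submodule.le_comap_mkQ _ _)).finrank_eq
        rw [Submodule.map_comap_eq_of_surjective l.1.mkQ_surjective] at e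
        rw [h2, W.2] at h'
        rw [Module.finrank_fin_fun] at h
        omega⟩
    have hf : Function.Injective f := fun a b h =>
      Subtype.ext (Submodule.comap_injective_of_surjective l.1.mkQ_surjective
        (congrArg Subtype.val h))
    refine ⟨(Set.toFinite (Set.range f)).toFinset, ?_, ?_⟩
    · rw [← Set.ncard_eq_toFinset_card, Set.ncard_range_of_injective hf,
        ← Nat.card_congr (Projectivization.equivSubmodule F _),
        Projectivization.card_of_finrank_two F _ h2, Nat.card_eq_fintype_card]
    · intro x hx
      obtain ⟨W, rfl⟩ := (Set.Finite.mem_toFinset _).1 hx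
      exact Submodule.le_comap_mkQ _ _
  point_unique l m x y h := point_eq_of_ne h
  plane_unique l m x y h h1 h2 h3 h4 := by
    have hle := line_two_le_sup h
    have hx : l.1 ⊔ m.1 = x.1 :=
      Submodule.eq_of_le_of_finrank_le (sup_le h1 h2) (by rw [x.2]; exact hle)
    have hy : l.1 ⊔ m.1 = y.1 :=
      Submodule.eq_of_le_of_finrank_le (sup_le h3 h4) (by rw [y.2]; exact hle)
    exact Subtype.ext (hx.symm.trans hy)
  meet_iff l m h := by
    constructor
    · intro hp
      exact ⟨⟨l.1 ⊔ m.1, finrank_sup_eq_three h hp⟩, le_sup_left, le_sup_right⟩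
    · rintro ⟨e, h1, h2⟩
      rw [exists_point_iff_inf]
      intro hb
      have a := finrank_sup_add_inf l m
      have b := Submodule.finrank_mono (sup_le h1 h2)
      rw [hb, finrank_bot] at a
      rw [e.2] at b
      omega
  triangle l m n h1 h2 h3 a b c := by
    have hlm := finrank_sup_eq_three h1 a
    obtain ⟨x, xl, xm⟩ := a
    obtain ⟨y, ym, yn⟩ := b
    obtain ⟨z, zl, zn⟩ := c
    by_cases hyz : y = z
    · subst hyz
      exact Or.inl ⟨y, zl, ym, yn⟩
    · -- `n` joins a point of `m` to a different point of `l`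
      right
      refine ⟨⟨l.1 ⊔ m.1, hlm⟩, le_sup_left, le_sup_right, ?_⟩
      have hinf : y.1 ⊓ z.1 = ⊥ := by
        by_contra hne
        have h1 := Submodule.one_le_finrank_iff.2 hne
        have hy : y.1 ⊓ z.1 = y.1 :=
          Submodule.eq_of_le_of_finrank_le inf_le_left (by rw [y.2]; exact h1)
        have hz : y.1 ⊓ z.1 = z.1 :=
          Submodule.eq_of_le_of_finrank_le inf_le_right (by rw [z.2]; exact h1)
        exact hyz (Subtype.ext (hy.symm.trans hz))
      have hs := Submodule.finrank_sup_add_finrank_inf_eq y.1 z.1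
      rw [hinf, finrank_bot, y.2, z.2] at hs
      have : y.1 ⊔ z.1 = n.1 :=
        Submodule.eq_of_le_of_finrank_le (sup_le yn zn) (by rw [n.2]; omega)
      show n.1 ≤ l.1 ⊔ m.1
      rw [← this]
      exact sup_le (ym.trans le_sup_right) (zl.trans le_sup_left)

/-- Two linearly independent vectors of a line span it. -/
theorem exists_eq_combination {l : PGLine F} {u v : Fin 4 → F} (hu : u ∈ l.1) (hv : v ∈ l.1)
    (h : ∀ s t : F, s • u + t • v = 0 → s = 0 ∧ t = 0) {w : Fin 4 → F} (hw : w ∈ l.1) :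
    ∃ s t : F, s • u + t • v = w := by
  have hli : LinearIndependent F ![u, v] := LinearIndependent.pair_iff.2 h
  have h1 := finrank_span_eq_card hli
  have h2 : Submodule.span F (Set.range ![u, v]) = l.1 := by
    apply Submodule.eq_of_le_of_finrank_le
    · rw [Submodule.span_le]
      rintro _ ⟨i, rfl⟩
      fin_cases i
      · exact hu
      · exact hv
    · rw [h1, l.2]; simp
  rw [← h2] at hw
  rwa [Matrix.range_cons_cons_empty, Submodule.mem_span_pair] at hw

theorem pair_indep {W : Submodule F (Fin 4 → F)} {u v : Fin 4 → F} (hu : u ∈ W) (hu0 : u ≠ 0)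
    (hv : v ∉ W) (s t : F) (h : s • u + t • v = 0) : s = 0 ∧ t = 0 := by
  have ht : t = 0 := by
    by_contra ht
    apply hv
    have : v = (-(t⁻¹ * s)) • u := by
      have : t • v = -(s • u) := by rw [eq_neg_iff_add_eq_zero, add_comm]; exact h
      rw [neg_smul, mul_smul, ← smul_neg, ← this, smul_smul, inv_mul_cancel₀ ht, one_smul]
    rw [this]
    exact W.smul_mem _ hu
  subst ht
  simpa [hu0] using h

/-! ### Lines on a hyperbolic quadric -/

section Quadric

variable (g : (Fin 4 → F) ≃ₗ[F] (Fin 4 → F))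

/-- The polar form of the quadratic form `v ↦ H3Form F (g v)`. -/
def pol (u v : Fin 4 → F) : F :=
  g u 0 * g v 1 + g u 1 * g v 0 + g u 2 * g v 3 + g u 3 * g v 2

variable {g}

theorem H3Form_comb (s t : F) (u v : Fin 4 → F) : H3Form F (g (s • u + t • v)) =
    s ^ 2 * H3Form F (g u) + t ^ 2 * H3Form F (g v) + s * t * pol g u v := by
  simp only [H3Form, pol, map_add, map_smul, Pi.add_apply, Pi.smul_apply, smul_eq_mul]
  ring

theorem H3Form_add (u v : Fin 4 → F) : H3Form F (g (u + v)) =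
    H3Form F (g u) + H3Form F (g v) + pol g u v := by
  simpa using H3Form_comb (g := g) 1 1 u v

theorem pol_comm (u v : Fin 4 → F) : pol g u v = pol g v u := by
  simp only [pol]; ring

theorem pol_comb_right (u v w : Fin 4 → F) (s t : F) :
    pol g u (s • v + t • w) = s * pol g u v + t * pol g u w := by
  simp only [pol, map_add, map_smul, Pi.add_apply, Pi.smul_apply, smul_eq_mul]
  ring

theorem pol_comb_left (u v w : Fin 4 → F) (s t : F) :
    pol g (s • v + t • w) u = s * pol g v u + t * pol g w u := by
  rw [pol_comm, pol_comb_right, pol_comm u v, pol_comm u w]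

theorem pol_self_line {l : PGLine F} (hl : l ∈ hypQuadricLines F g) {u v : Fin 4 → F}
    (hu : u ∈ l.1) (hv : v ∈ l.1) : pol g u v = 0 := by
  have h := H3Form_add (g := g) u v
  rw [hl _ (l.1.add_mem hu hv), hl _ hu, hl _ hv] at h
  simpa using h.symm

/-- The polar form is nondegenerate. -/
theorem eq_zero_of_pol {u : Fin 4 → F} (h : ∀ w, pol g u w = 0) : u = 0 := by
  have h' : ∀ w : Fin 4 → F, g u 0 * w 1 + g u 1 * w 0 + g u 2 * w 3 + g u 3 * w 2 = 0 := by
    intro w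
    simpa [pol] using h (g.symm w)
  have h0 := h' ![0, 1, 0, 0]
  have h1 := h' ![1, 0, 0, 0]
  have h2 := h' ![0, 0, 0, 1]
  have h3 := h' ![0, 0, 1, 0]
  simp at h0 h1 h2 h3
  rw [← g.map_eq_zero_iff]
  ext i
  fin_cases i <;> simp [h0, h1, h2, h3]

/-- A vector orthogonal to two lines and to a vector outside their span is zero. -/
theorem eq_zero_of_orthogonal {l m : PGLine F} (hne : l ≠ m) {u w : Fin 4 → F}
    (hl : ∀ x ∈ l.1, pol g u x = 0) (hm : ∀ x ∈ m.1, pol g u x = 0)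
    (hw : w ∉ l.1 ⊔ m.1) (huw : pol g u w = 0) : u = 0 := by
  let K : Submodule F (Fin 4 → F) :=
    { carrier := {x | pol g u x = 0}
      add_mem' := by
        intro a b ha hb
        have := pol_comb_right (g := g) u a b 1 1
        rw [Set.mem_ofPred_eq] at ha hb ⊢
        rw [ha, hb] at this
        simpa using this
      zero_mem' := by simp [pol]
      smul_mem' := by
        intro c a ha
        have := pol_comb_right (g := g) u a 0 c 0
        rw [Set.mem_ofPred_eq] at ha ⊢
        rw [ha] at this
        simpa using this }
  have hlt : l.1 ⊔ m.1 < K := by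
    refine lt_of_le_of_ne (sup_le hl hm) fun h => hw ?_
    rw [h]
    exact huw
  have h1 := Submodule.finrank_lt_finrank_of_lt hlt
  have h2 := line_two_le_sup hne
  have hK : K = ⊤ := Submodule.eq_top_of_finrank_eq (le_antisymm (Submodule.finrank_le K) (by
    rw [Module.finrank_fin_fun]; omega))
  refine eq_zero_of_pol (g := g) fun x => ?_
  have : x ∈ K := hK ▸ Submodule.mem_top
  exact this

/-- At most two lines of the quadric pass through any of its points. If `l` and `m` are two lines
through `v`, then every line of the quadric through `v` is orthogonal to `v`, so lies in the plane
`l ⊔ m`. A third such line would make that plane totally isotropic, contradicting the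
nondegeneracy of the polar form. -/
theorem eq_or_eq_of_common {l m n : PGLine F} (hl : l ∈ hypQuadricLines F g)
    (hm : m ∈ hypQuadricLines F g) (hn : n ∈ hypQuadricLines F g) (hlm : l ≠ m)
    {v : Fin 4 → F} (hv : v ≠ 0) (vl : v ∈ l.1) (vm : v ∈ m.1) (vn : v ∈ n.1) :
    n = l ∨ n = m := by
  by_contra! hcon
  obtain ⟨hnl, hnm⟩ := hcon
  by_cases hsub : n.1 ≤ l.1 ⊔ m.1
  · obtain ⟨c, cn, cl⟩ := SetLike.not_le_iff_exists.1 (fun h => hnl (line_eq_of_le h))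
    obtain ⟨a, al, am⟩ := SetLike.not_le_iff_exists.1 (fun h => hlm (line_eq_of_le h))
    obtain ⟨b, bm, bl⟩ := SetLike.not_le_iff_exists.1 (fun h => hlm (line_eq_of_le h).symm)
    obtain ⟨x, xl, y, ym, hxy⟩ := Submodule.mem_sup.1 (hsub cn)
    obtain ⟨s₁, s₂, rfl⟩ := exists_eq_combination vl al (pair_indep vm hv am) xl
    obtain ⟨t₁, t₂, rfl⟩ := exists_eq_combination vm bm (pair_indep vl hv bl) ym
    have hpol : s₂ * t₂ * pol g a b = 0 := by
      have h := H3Form_add (g := g) (s₁ • v + s₂ • a) (t₁ • v + t₂ • b)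
      rw [hxy, hn c cn, hl _ xl, hm _ ym, pol_comb_left, pol_comb_right, pol_comb_right,
        pol_self_line hl vl vl, pol_self_line hm vm bm, pol_self_line hl al vl] at h
      linear_combination -h
    -- hence the plane `l ⊔ m` is totally isotropic
    have hab : pol g a b = 0 := by
      rcases mul_eq_zero.1 hpol with h | h
      · rcases mul_eq_zero.1 h with rfl | rfl
        · -- then `c` and `v` span both `m` and `n`
          exfalso
          refine hnm (line_eq_of_le fun w hw => ?_)
          obtain ⟨p, r, rfl⟩ := exists_eq_combination vn cn (pair_indep vl hv cl) hw
          refine m.1.add_mem (m.1.smul_mem _ vm) (m.1.smul_mem _ ?_)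
          rw [← hxy, zero_smul, add_zero]
          exact m.1.add_mem (m.1.smul_mem _ vm) ym
        · exfalso
          apply cl
          rw [← hxy, zero_smul, add_zero]
          exact l.1.add_mem xl (l.1.smul_mem _ vl)
      · exact h
    refine hv (eq_zero_of_pol (g := g) fun w => ?_)
    by_cases hw : w ∈ l.1 ⊔ m.1
    · obtain ⟨x, xl', y, ym', rfl⟩ := Submodule.mem_sup.1 hw
      have := pol_comb_right (g := g) v x y 1 1
      rw [pol_self_line hl vl xl', pol_self_line hm vm ym'] at this
      simpa using this
    · -- a vector of `l` orthogonal to `w`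
      have hul : pol g a w • v + (-pol g v w) • a ∈ l.1 :=
        l.1.add_mem (l.1.smul_mem _ vl) (l.1.smul_mem _ al)
      have h0 := eq_zero_of_orthogonal (g := g) hlm
        (fun x hx => pol_self_line hl hul hx)
        (fun x hx => by
          obtain ⟨p, r, rfl⟩ := exists_eq_combination vm bm (pair_indep vl hv bl) hx
          rw [pol_comb_left, pol_comb_right, pol_comb_right, pol_self_line hl vl vl,
            pol_self_line hm vm bm, pol_self_line hl al vl, hab]
          ring)
        hw (by rw [pol_comb_left]; ring)
      simpa using (pair_indep vm hv am _ _ h0).2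
  · obtain ⟨w, wn, hw⟩ := SetLike.not_le_iff_exists.1 hsub
    exact hv (eq_zero_of_orthogonal (g := g) hlm (fun x hx => pol_self_line hl vl hx)
      (fun x hx => pol_self_line hm vm hx) hw (pol_self_line hn vn wn))

theorem not_mem_of_skew {l m : PGLine F} (h : ¬ ∃ v : Fin 4 → F, v ≠ 0 ∧ v ∈ l.1 ∧ v ∈ m.1)
    {v : Fin 4 → F} (hv : v ≠ 0) (vl : v ∈ l.1) : v ∉ m.1 := fun vm => h ⟨v, hv, vl, vm⟩

/-- A line meeting three pairwise skew lines of a quadric lies on the quadric. -/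
theorem transversal_mem {l₁ l₂ l₃ m : PGLine F} (h₁ : l₁ ∈ hypQuadricLines F g)
    (h₂ : l₂ ∈ hypQuadricLines F g) (h₃ : l₃ ∈ hypQuadricLines F g)
    (h12 : ¬ ∃ v : Fin 4 → F, v ≠ 0 ∧ v ∈ l₁.1 ∧ v ∈ l₂.1)
    (h13 : ¬ ∃ v : Fin 4 → F, v ≠ 0 ∧ v ∈ l₁.1 ∧ v ∈ l₃.1)
    (h23 : ¬ ∃ v : Fin 4 → F, v ≠ 0 ∧ v ∈ l₂.1 ∧ v ∈ l₃.1)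
    (m1 : ∃ v : Fin 4 → F, v ≠ 0 ∧ v ∈ l₁.1 ∧ v ∈ m.1)
    (m2 : ∃ v : Fin 4 → F, v ≠ 0 ∧ v ∈ l₂.1 ∧ v ∈ m.1)
    (m3 : ∃ v : Fin 4 → F, v ≠ 0 ∧ v ∈ l₃.1 ∧ v ∈ m.1) : m ∈ hypQuadricLines F g := by
  obtain ⟨u, hu, ul, um⟩ := m1
  obtain ⟨v, hv, vl, vm⟩ := m2
  obtain ⟨w, hw, wl, wm⟩ := m3
  have hind : ∀ s t : F, s • u + t • v = 0 → s = 0 ∧ t = 0 := by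
    intro s t h
    have := pair_indep vl hv (not_mem_of_skew h12 hu ul) t s (by rw [add_comm]; exact h)
    exact this.symm
  have hp : pol g u v = 0 := by
    obtain ⟨s, t, rfl⟩ := exists_eq_combination um vm hind wm
    have h := h₃ _ wl
    rw [H3Form_comb, h₁ _ ul, h₂ _ vl] at h
    have h' : s * t * pol g u v = 0 := by linear_combination h
    rcases mul_eq_zero.1 h' with h | h
    · exfalso
      rcases mul_eq_zero.1 h with rfl | rfl
      · exact h23 ⟨_, hw, by simpa using l₂.1.smul_mem t vl, wl⟩
      · exact h13 ⟨_, hw, by simpa using l₁.1.smul_mem s ul, wl⟩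
    · exact h
  intro x hx
  obtain ⟨s, t, rfl⟩ := exists_eq_combination um vm hind hx
  rw [H3Form_comb, h₁ _ ul, h₂ _ vl, hp]
  ring

/-- A line `n` of the quadric meets one of two given skew lines `l` and `m` of the quadric, or some
line of the quadric which meets `l`: for `x + y ∈ n` with `x ∈ l` and `y ∈ m` both nonzero, the line
spanned by `x` and `y` lies on the quadric. -/
theorem exists_transversal {l m n : PGLine F} (hl : l ∈ hypQuadricLines F g)
    (hm : m ∈ hypQuadricLines F g) (hn : n ∈ hypQuadricLines F g)
    (hlm : ¬ ∃ v : Fin 4 → F, v ≠ 0 ∧ v ∈ l.1 ∧ v ∈ m.1) :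
    (∃ v : Fin 4 → F, v ≠ 0 ∧ v ∈ l.1 ∧ v ∈ n.1) ∨
    (∃ v : Fin 4 → F, v ≠ 0 ∧ v ∈ m.1 ∧ v ∈ n.1) ∨
    ∃ k ∈ hypQuadricLines F g, (∃ v : Fin 4 → F, v ≠ 0 ∧ v ∈ l.1 ∧ v ∈ k.1) ∧
      ∃ v : Fin 4 → F, v ≠ 0 ∧ v ∈ k.1 ∧ v ∈ n.1 := by
  have htop : l.1 ⊔ m.1 = ⊤ := by
    have h := finrank_sup_add_inf l m
    have hb : l.1 ⊓ m.1 = ⊥ := by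
      rw [exists_point_iff l m |>.symm, exists_point_iff_inf] at hlm
      exact not_not.1 hlm
    rw [hb, finrank_bot] at h
    exact Submodule.eq_top_of_finrank_eq (by rw [Module.finrank_fin_fun]; omega)
  obtain ⟨z, z0, zn⟩ : ∃ z : Fin 4 → F, z ≠ 0 ∧ z ∈ n.1 := by
    have : n.1 ≠ ⊥ := by
      intro h
      have := n.2
      rw [h, finrank_bot] at this
      exact absurd this (by norm_num)
    obtain ⟨v, hv, hv0⟩ := Submodule.exists_mem_ne_zero_of_ne_bot this
    exact ⟨v, hv0, hv⟩
  obtain ⟨x, xl, y, ym, hxy⟩ := Submodule.mem_sup.1 (htop ▸ Submodule.mem_top : z ∈ l.1 ⊔ m.1)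
  by_cases hx : x = 0
  · right; left
    subst hx
    rw [zero_add] at hxy
    subst hxy
    exact ⟨y, z0, ym, zn⟩
  by_cases hy : y = 0
  · left
    subst hy
    rw [add_zero] at hxy
    subst hxy
    exact ⟨x, z0, xl, zn⟩
  right; right
  have hp : pol g x y = 0 := by
    have h := H3Form_add (g := g) x y
    rw [hxy, hn _ zn, hl _ xl, hm _ ym] at h
    simpa using h.symm
  have hli : LinearIndependent F ![x, y] :=
    LinearIndependent.pair_iff.2 fun s t h => by
      have := pair_indep ym hy (not_mem_of_skew hlm hx xl) t s (by rw [add_comm]; exact h)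
      exact this.symm
  have hfr := finrank_span_eq_card hli
  rw [Matrix.range_cons_cons_empty, Fintype.card_fin] at hfr
  have hxk : x ∈ Submodule.span F {x, y} := Submodule.subset_span (by simp)
  have hyk : y ∈ Submodule.span F {x, y} := Submodule.subset_span (by simp)
  refine ⟨⟨Submodule.span F {x, y}, hfr⟩, ?_, ⟨x, hx, xl, hxk⟩, z, z0, ?_, zn⟩
  · intro w hw
    obtain ⟨s, t, rfl⟩ := Submodule.mem_span_pair.1 hw
    rw [H3Form_comb, hl _ xl, hm _ ym, hp]
    ring
  · show z ∈ Submodule.span F {x, y}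
    rw [← hxy]
    exact Submodule.add_mem _ hxk hyk

/-- Three pairwise skew lines lie on a hyperbolic quadric. Decompose a basis of `l₃` along
`F^4 = l₁ ⊕ l₂` as `a + d`, `b + e`. Then `a, b, d, e` is a basis of `F^4`, and the three lines lie
on the quadric `x₁ y₂ - x₂ y₁ = 0` in the coordinates of `x₁ a + x₂ b + y₁ d + y₂ e`. -/
theorem exists_quadric {l₁ l₂ l₃ : PGLine F}
    (h12 : ¬ ∃ v : Fin 4 → F, v ≠ 0 ∧ v ∈ l₁.1 ∧ v ∈ l₂.1)
    (h13 : ¬ ∃ v : Fin 4 → F, v ≠ 0 ∧ v ∈ l₁.1 ∧ v ∈ l₃.1)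
    (h23 : ¬ ∃ v : Fin 4 → F, v ≠ 0 ∧ v ∈ l₂.1 ∧ v ∈ l₃.1) :
    ∃ g : (Fin 4 → F) ≃ₗ[F] (Fin 4 → F), l₁ ∈ hypQuadricLines F g ∧
      l₂ ∈ hypQuadricLines F g ∧ l₃ ∈ hypQuadricLines F g := by
  have htop : l₁.1 ⊔ l₂.1 = ⊤ := by
    have h := finrank_sup_add_inf l₁ l₂
    have hb : l₁.1 ⊓ l₂.1 = ⊥ := by
      rw [exists_point_iff l₁ l₂ |>.symm, exists_point_iff_inf] at h12
      exact not_not.1 h12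
    rw [hb, finrank_bot] at h
    exact Submodule.eq_top_of_finrank_eq (by rw [Module.finrank_fin_fun]; omega)
  let β := Module.finBasisOfFinrankEq F l₃.1 l₃.2
  have hβ : ∀ s t : F, s • (β 0 : Fin 4 → F) + t • (β 1 : Fin 4 → F) = 0 → s = 0 ∧ t = 0 := by
    intro s t h
    have h' : s • β 0 + t • β 1 = 0 := Subtype.ext (by simpa using h)
    have := Fintype.linearIndependent_iff.1 β.linearIndependent ![s, t] (by
      simpa [Fin.sum_univ_two] using h')
    exact ⟨this 0, this 1⟩
  obtain ⟨a, al, a', al', ha⟩ :=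
    Submodule.mem_sup.1 (htop ▸ Submodule.mem_top : (β 0 : Fin 4 → F) ∈ l₁.1 ⊔ l₂.1)
  obtain ⟨b, bl, b', bl', hb⟩ :=
    Submodule.mem_sup.1 (htop ▸ Submodule.mem_top : (β 1 : Fin 4 → F) ∈ l₁.1 ⊔ l₂.1)
  have hmem : ∀ s t : F, (s • a + t • b) + (s • a' + t • b') ∈ l₃.1 := by
    intro s t
    have : (s • a + t • b) + (s • a' + t • b') =
        s • (β 0 : Fin 4 → F) + t • (β 1 : Fin 4 → F) := by
      rw [← ha, ← hb]; module
    rw [this]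
    exact l₃.1.add_mem (l₃.1.smul_mem _ (β 0).2) (l₃.1.smul_mem _ (β 1).2)
  have hzero : ∀ s t : F, (s • a + t • b) + (s • a' + t • b') = 0 → s = 0 ∧ t = 0 := by
    intro s t h
    apply hβ
    rw [← ha, ← hb, ← h]; module
  -- the components of a vector of `l₃` in `l₁` and in `l₂` vanish only simultaneously
  have hab : ∀ s t : F, s • a + t • b = 0 → s = 0 ∧ t = 0 := by
    intro s t h
    by_contra hst
    refine h23 ⟨s • a' + t • b', fun h' => hst (hzero s t (by rw [h, h', add_zero])),
      l₂.1.add_mem (l₂.1.smul_mem _ al') (l₂.1.smul_mem _ bl'), ?_⟩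
    have := hmem s t
    rwa [h, zero_add] at this
  have hab' : ∀ s t : F, s • a' + t • b' = 0 → s = 0 ∧ t = 0 := by
    intro s t h
    by_contra hst
    refine h13 ⟨s • a + t • b, fun h' => hst (hzero s t (by rw [h, h', add_zero])),
      l₁.1.add_mem (l₁.1.smul_mem _ al) (l₁.1.smul_mem _ bl), ?_⟩
    have := hmem s t
    rwa [h, add_zero] at this
  -- the order and the sign turn `x₁ y₂ - x₂ y₁` into the standard form `x₀ x₁ + x₂ x₃`
  have hli : LinearIndependent F ![a, b', -b, a'] := by
    rw [Fintype.linearIndependent_iff]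
    intro c hc
    simp only [Fin.sum_univ_four, Matrix.cons_val_zero, Matrix.cons_val_one, Matrix.cons_val] at hc
    have h1 : c 0 • a + (-c 2) • b = -(c 3 • a' + c 1 • b') := by
      rw [eq_neg_iff_add_eq_zero, ← hc]; module
    have h2 : c 0 • a + (-c 2) • b = 0 := by
      by_contra hne
      refine h12 ⟨_, hne, l₁.1.add_mem (l₁.1.smul_mem _ al) (l₁.1.smul_mem _ bl), ?_⟩
      rw [h1]
      exact l₂.1.neg_mem (l₂.1.add_mem (l₂.1.smul_mem _ al') (l₂.1.smul_mem _ bl'))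
    have h3 : c 3 • a' + c 1 • b' = 0 := by
      rw [h2] at h1
      exact neg_eq_zero.1 h1.symm
    obtain ⟨e0, e2⟩ := hab _ _ h2
    obtain ⟨e3, e1⟩ := hab' _ _ h3
    intro i
    fin_cases i
    · exact e0
    · exact e1
    · exact neg_eq_zero.1 e2
    · exact e3
  let γ := basisOfLinearIndependentOfCardEqFinrank hli (by simp)
  have hγ : ∀ c : Fin 4 → F, γ.equivFun (c 0 • a + c 1 • b' + c 2 • (-b) + c 3 • a') = c := by
    intro c
    have : γ.equivFun.symm c = c 0 • a + c 1 • b' + c 2 • (-b) + c 3 • a' := by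
      rw [Module.Basis.equivFun_symm_apply]
      simp [γ, Fin.sum_univ_four]
    rw [← this, LinearEquiv.apply_symm_apply]
  refine ⟨γ.equivFun, ?_, ?_, ?_⟩
  · intro v hv
    obtain ⟨s, t, rfl⟩ := exists_eq_combination al bl hab hv
    have := hγ ![s, 0, -t, 0]
    have e : s • a + t • b = (![s, 0, -t, 0] : Fin 4 → F) 0 • a +
      (![s, 0, -t, 0] : Fin 4 → F) 1 • b' + (![s, 0, -t, 0] : Fin 4 → F) 2 • (-b) +
      (![s, 0, -t, 0] : Fin 4 → F) 3 • a' := by simp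
    rw [e, this]
    simp [H3Form]
  · intro v hv
    obtain ⟨s, t, rfl⟩ := exists_eq_combination al' bl' hab' hv
    have := hγ ![0, t, 0, s]
    have e : s • a' + t • b' = (![0, t, 0, s] : Fin 4 → F) 0 • a +
      (![0, t, 0, s] : Fin 4 → F) 1 • b' + (![0, t, 0, s] : Fin 4 → F) 2 • (-b) +
      (![0, t, 0, s] : Fin 4 → F) 3 • a' := by simp [add_comm]
    rw [e, this]
    simp [H3Form]
  · intro v hv
    obtain ⟨s, t, rfl⟩ := exists_eq_combination (β 0).2 (β 1).2 hβ hv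
    have := hγ ![s, t, -t, s]
    have e : s • (β 0 : Fin 4 → F) + t • (β 1 : Fin 4 → F) =
      (![s, t, -t, s] : Fin 4 → F) 0 • a +
      (![s, t, -t, s] : Fin 4 → F) 1 • b' + (![s, t, -t, s] : Fin 4 → F) 2 • (-b) +
      (![s, t, -t, s] : Fin 4 → F) 3 • a' := by
      rw [← ha, ← hb]
      simp
      module
    rw [e, this]
    simp [H3Form]
    ring

end Quadric

/-! ### The support of a codeword -/

/-- A sum over `A` that vanishes cannot have exactly one nonzero term. -/
theorem exists_ne_of_finsum_mem {R : Type*} [AddCommMonoid R] (c : PGLine F → R)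
    {A : Set (PGLine F)} (h : ∑ᶠ L ∈ A, c L = 0) {l : PGLine F} (hl : l ∈ A) (hc : c l ≠ 0) :
    ∃ m, c m ≠ 0 ∧ m ≠ l ∧ m ∈ A := by
  by_contra! hcon
  apply hc
  rw [← h, ← finsum_mem_singleton (f := c) (a := l)]
  apply finsum_mem_inter_support_eq
  ext m
  simp only [Set.mem_inter_iff, Set.mem_singleton_iff, Function.mem_support]
  constructor
  · rintro ⟨rfl, h⟩
    exact ⟨hl, h⟩
  · rintro ⟨h1, h2⟩
    exact ⟨by_contra fun h => hcon m h2 h h1, h2⟩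

variable (F)
/-- A nonzero codeword `c` of the `p`-ary dual code of points and planes of `Q⁺(5,q)`,
`q > 88`, of weight at most `2q+2` — viewed via the Klein correspondence as a function on
the lines of `PG(3,q)` whose values sum to zero on every point pencil and in every
plane — has as support the `2(q+1)` lines of a hyperbolic quadric `Q⁺(3,q)`, the lines of
one regulus carrying a symbol `α ≠ 0` and the lines of the opposite regulus `-α`. -/
theorem dual_code_Qplus5_small_weight (p q : ℕ) (hp : p.Prime) [CharP F p]
    (hq : Fintype.card F = q) (hq88 : 88 < q)
    (c : PGLine F → ZMod p) (hc0 : c ≠ 0)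
    (hpt : ∀ P : PGPoint F, ∑ᶠ L ∈ {L : PGLine F | P.1 ≤ L.1}, c L = 0)
    (hpl : ∀ π : PGPlane F, ∑ᶠ L ∈ {L : PGLine F | L.1 ≤ π.1}, c L = 0)
    (hwt : Set.ncard {L : PGLine F | c L ≠ 0} ≤ 2 * q + 2) :
    ∃ g : (Fin 4 → F) ≃ₗ[F] (Fin 4 → F), ∃ α : ZMod p, α ≠ 0 ∧
      ∃ R₁ R₂ : Set (PGLine F),
        {L : PGLine F | c L ≠ 0} = hypQuadricLines F g ∧
        R₁ ∪ R₂ = hypQuadricLines F g ∧ Disjoint R₁ R₂ ∧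
        R₁.ncard = q + 1 ∧ R₂.ncard = q + 1 ∧
        (∀ L ∈ R₁, ∀ M ∈ R₁, L = M ∨ L.1 ⊓ M.1 = ⊥) ∧
        (∀ L ∈ R₂, ∀ M ∈ R₂, L = M ∨ L.1 ⊓ M.1 = ⊥) ∧
        (∀ L ∈ R₁, c L = α) ∧ (∀ L ∈ R₂, c L = -α) := by
  have hpt' : ∀ P : PGPoint F, ∀ l, c l ≠ 0 → P.1 ≤ l.1 → ∃ m, c m ≠ 0 ∧ m ≠ l ∧ P.1 ≤ m.1 :=
    fun P l hl hP => exists_ne_of_finsum_mem c (hpt P) hP hl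
  have hpl' : ∀ e : PGPlane F, ∀ l, c l ≠ 0 → l.1 ≤ e.1 → ∃ m, c m ≠ 0 ∧ m ≠ l ∧ m.1 ≤ e.1 :=
    fun e l hl he => exists_ne_of_finsum_mem c (hpl e) he hl
  let S : Finset (PGLine F) := (Set.toFinite {L : PGLine F | c L ≠ 0}).toFinset
  have memS : ∀ l, l ∈ S ↔ c l ≠ 0 := fun l => Set.Finite.mem_toFinset _
  obtain ⟨A, B, hAB, hdis, hA, hB, hAA, hBB, hABm⟩ :=
    (pgGeometry (F := F)).exists_bipartition (S := S) (by omega)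
      (by
        obtain ⟨l, hl⟩ := Function.ne_iff.1 hc0
        exact ⟨l, (memS l).2 hl⟩)
      (by rw [hq, ← Set.ncard_eq_toFinset_card]; exact hwt)
      (by simpa only [memS] using hpt') (by simpa only [memS] using hpl')
  rw [hq] at hA hB
  have mem_union : ∀ l, l ∈ A ∨ l ∈ B ↔ c l ≠ 0 := by
    intro l
    rw [← memS, ← hAB, Finset.mem_union]
  obtain ⟨a₁, a₂, a₃, ha₁, ha₂, ha₃, ha12, ha13, ha23⟩ :=
    Finset.two_lt_card_iff.1 (show 2 < A.card by omega)
  obtain ⟨b₁, b₂, b₃, hb₁, hb₂, hb₃, hb12, hb13, hb23⟩ :=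
    Finset.two_lt_card_iff.1 (show 2 < B.card by omega)
  have hAA' := hAA
  have hBB' := hBB
  have hABm' := hABm
  simp only [exists_point_iff] at hAA' hBB' hABm'
  obtain ⟨g, hg₁, hg₂, hg₃⟩ := exists_quadric (hAA' _ ha₁ _ ha₂ ha12) (hAA' _ ha₁ _ ha₃ ha13)
    (hAA' _ ha₂ _ ha₃ ha23)
  have hBg : ∀ b ∈ B, b ∈ hypQuadricLines F g := fun b hb =>
    transversal_mem hg₁ hg₂ hg₃ (hAA' _ ha₁ _ ha₂ ha12) (hAA' _ ha₁ _ ha₃ ha13)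
      (hAA' _ ha₂ _ ha₃ ha23) (hABm' _ ha₁ _ hb) (hABm' _ ha₂ _ hb) (hABm' _ ha₃ _ hb)
  have hBA : ∀ b ∈ B, ∀ a ∈ A, ∃ v : Fin 4 → F, v ≠ 0 ∧ v ∈ b.1 ∧ v ∈ a.1 := by
    intro b hb a ha
    obtain ⟨v, h0, h1, h2⟩ := hABm' a ha b hb
    exact ⟨v, h0, h2, h1⟩
  have hAg : ∀ a ∈ A, a ∈ hypQuadricLines F g := fun a ha =>
    transversal_mem (hBg _ hb₁) (hBg _ hb₂) (hBg _ hb₃) (hBB' _ hb₁ _ hb₂ hb12)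
      (hBB' _ hb₁ _ hb₃ hb13) (hBB' _ hb₂ _ hb₃ hb23) (hBA _ hb₁ _ ha) (hBA _ hb₂ _ ha)
      (hBA _ hb₃ _ ha)
  have hSg : ∀ l, c l ≠ 0 → l ∈ hypQuadricLines F g := fun l hl =>
    ((mem_union l).2 hl).elim (hAg l) (hBg l)
  -- a line of the quadric meeting a line of the support belongs to the support
  have hmeet : ∀ l, c l ≠ 0 → ∀ n ∈ hypQuadricLines F g,
      (∃ v : Fin 4 → F, v ≠ 0 ∧ v ∈ l.1 ∧ v ∈ n.1) → c n ≠ 0 := by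
    rintro l hl n hn ⟨v, hv, vl, vn⟩
    obtain ⟨m, hm, hml, hPm⟩ := hpt' ⟨Submodule.span F {v}, finrank_span_singleton hv⟩ l hl
      ((Submodule.span_singleton_le_iff_mem _ _).2 vl)
    have vm : v ∈ m.1 := (Submodule.span_singleton_le_iff_mem _ _).1 hPm
    rcases eq_or_eq_of_common (hSg l hl) (hSg m hm) hn hml.symm hv vl vm vn with rfl | rfl
    · exact hl
    · exact hm
  have hgS : ∀ n ∈ hypQuadricLines F g, c n ≠ 0 := by
    intro n hn
    have h1 := (mem_union a₁).1 (Or.inl ha₁)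
    have h2 := (mem_union a₂).1 (Or.inl ha₂)
    rcases exists_transversal hg₁ hg₂ hn (hAA' _ ha₁ _ ha₂ ha12) with h | h | ⟨k, hk, h, h'⟩
    · exact hmeet _ h1 n hn h
    · exact hmeet _ h2 n hn h
    · exact hmeet _ (hmeet _ h1 k hk h) n hn h'
  have hsum : ∀ a ∈ A, ∀ b ∈ B, c a + c b = 0 := by
    intro a ha b hb
    obtain ⟨P, hPa, hPb⟩ := hABm a ha b hb
    have hab : a ≠ b := fun h => Finset.disjoint_left.1 hdis ha (h ▸ hb)
    rw [← hpt P, ← finsum_mem_pair hab]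
    apply finsum_mem_inter_support_eq
    ext l
    simp only [Set.mem_inter_iff, Set.mem_insert_iff, Set.mem_singleton_iff,
      Function.mem_support, Set.mem_ofPred_eq]
    constructor
    · rintro ⟨rfl | rfl, h⟩
      · exact ⟨hPa, h⟩
      · exact ⟨hPb, h⟩
    · rintro ⟨hPl, h⟩
      refine ⟨?_, h⟩
      rcases (mem_union l).2 h with h | h
      · exact Or.inl (by_contra fun hne => hAA l h a ha hne ⟨P, hPl, hPa⟩)
      · exact Or.inr (by_contra fun hne => hBB l h b hb hne ⟨P, hPl, hPb⟩)
  refine ⟨g, c a₁, (mem_union a₁).1 (Or.inl ha₁), A, B, ?_, ?_, ?_, ?_, ?_, ?_, ?_, ?_, ?_⟩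
  · ext l
    exact ⟨hSg l, hgS l⟩
  · ext l
    rw [Set.mem_union, Finset.mem_coe, Finset.mem_coe, mem_union]
    exact ⟨hSg l, hgS l⟩
  · exact Finset.disjoint_coe.2 hdis
  · rw [Set.ncard_coe_finset, hA]
  · rw [Set.ncard_coe_finset, hB]
  · intro l hl m hm
    rw [or_iff_not_imp_left]
    intro hne
    have := hAA l hl m hm hne
    rw [exists_point_iff_inf] at this
    exact not_not.1 this
  · intro l hl m hm
    rw [or_iff_not_imp_left]
    intro hne
    have := hBB l hl m hm hne
    rw [exists_point_iff_inf] at this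
    exact not_not.1 this
  · intro l hl
    exact add_right_cancel ((hsum l hl b₁ hb₁).trans (hsum a₁ ha₁ b₁ hb₁).symm)
  · intro l hl
    exact eq_neg_of_add_eq_zero_right (hsum a₁ ha₁ l hl)
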